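/- (Lagrange inversion for real-analytic functions.) Let J be a segment and u, g : J → ℂ real-analytic with N_R(u) < ∞, N_S(g) < ∞; set T = 2·max(R, 2S) and define L_u(g,z)(t) = Σ_{n≥0} (z^n/n!)·D^{n-1}(u^n Dg)(t) (with the n = 0 term equal to g(t)). For every t ∈ J and every complex z with |z| < 1/(4 N_R(u) T), if the number x = t + z·L_u(u,z)(t) belongs to J, then L_u(g,z)(t) = g(x); in particular (taking g = u, with |z| < 1/(16 N_R(u) R)) x satisfies the equation t + z·u(x) = x, and moreover for |z| < 1/(8 N_R(u) T) one has g(x) = g(t) + Σ_{n≥1} (z^n/n!)·D^{n-1}(u^n Dg)(t). -/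

import Mathlib

open scoped Nat BigOperators ENNReal

/-- The analytic norm `N_R(h) = sup_{p} ‖D^p h‖_J / (p! R^p)`, valued in `ℝ≥0∞`. -/
noncomputable def anorm (J : Set ℝ) (R : ℝ) (h : ℝ → ℂ) : ℝ≥0∞ :=
  ⨆ p : ℕ, (⨆ t ∈ J, (‖iteratedDerivWithin p h J t‖₊ : ℝ≥0∞)) /
    ENNReal.ofReal (p ! * R ^ p)

/-- `lag J u h n = D^{n-1}(u^n · Dh)` for `n ≥ 1`; for `n = 0` it is `h` itself. -/
noncomputable def lag (J : Set ℝ) (u h : ℝ → ℂ) : ℕ → ℝ → ℂ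
  | 0 => h
  | (n + 1) => iteratedDerivWithin n (u ^ (n + 1) * derivWithin h J) J

/-- The Lagrange series `L_u(h,z)(t) = Σ_{n≥0} (z^n/n!)·D^{n-1}(u^n Dh)(t)`. -/
noncomputable def Lser (J : Set ℝ) (u h : ℝ → ℂ) (z : ℂ) (t : ℝ) : ℂ :=
  ∑' n : ℕ, z ^ n / (n ! : ℂ) * lag J u h n t

/-!
At a point `t` of `J` the Lagrange series of `g` has the coefficients of a purely formal one,
built from the Taylor series `U` and `G` of `u` and `g` at `t`. Formally, the Lagrange series of
`G` is `G(ψ)`, where `ψ = z U(ψ)` is the Lagrange series of `X`. If `U(0) = 0`, then `ψ = 0`;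
otherwise `ψ` is the compositional inverse of `X / U(X)`, and the formula for its coefficients is a
residue computation with the substitution `s = X / U(X)`. If `‖U_p‖ ≤ N R ^ p`, then
`‖ψ_(n+1)‖ ≤ N (4 N R) ^ n`, so for small `z` the identity can be evaluated term by term, with
absolute convergence. As `ψ(z) = z L_u(u, z)(t) = x - t`, it says that `L_u(g, z)(t)` is the sum of
the Taylor series of `g` at `t` evaluated at `x`, which is `g x`.
-/

section FormalInversion

open PowerSeries

theorem subst_X_mul_add_C {A : Type*} [CommRing A] {F : A⟦X⟧} (hF : constantCoeff F = 0)
    (G : A⟦X⟧) (c : A) : (X * G + C c).subst F = F * G.subst F + C c := by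
  have hsF : HasSubst F := .of_constantCoeff_zero' hF
  rw [subst_add hsF, subst_mul hsF, subst_X hsF, subst_C]
  rfl

theorem constantCoeff_subst_of_constantCoeff_eq_zero {A : Type*} [CommRing A] {F : A⟦X⟧}
    (hF : constantCoeff F = 0) (G : A⟦X⟧) :
    constantCoeff (G.subst F : A⟦X⟧) = constantCoeff G := by
  conv_lhs => rw [G.eq_X_mul_shift_add_const, subst_X_mul_add_C hF]
  simp [hF]

theorem coeff_succ_pow_succ_mul {A : Type*} [CommSemiring A] (U : A⟦X⟧) (n k : ℕ) :
    coeff (n + 1) (U ^ (k + 1)) * (n + 1) = (k + 1) * coeff n (U ^ k * d⁄dX A U) := by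
  rw [← coeff_derivative, derivative_pow, Nat.add_sub_cancel, mul_assoc,
    ← map_natCast (C (R := A)), coeff_C_mul, Nat.cast_add_one]

variable {K : Type*} [Field K]

/-- The formal Lagrange series `G(0) + ∑_{n ≥ 1} [X ^ (n - 1)] (U ^ n * G') / n * X ^ n`, which
expresses `G` in the variable `X / U(X)`. -/
noncomputable def lagrangeSeries (U G : K⟦X⟧) : K⟦X⟧ :=
  mk fun
    | 0 => constantCoeff G
    | n + 1 => coeff n (U ^ (n + 1) * d⁄dX K G) / (n + 1)

theorem constantCoeff_lagrangeSeries (U G : K⟦X⟧) :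
    constantCoeff (lagrangeSeries U G) = constantCoeff G := by
  rw [← coeff_zero_eq_constantCoeff_apply, lagrangeSeries, coeff_mk]

theorem coeff_succ_lagrangeSeries (U G : K⟦X⟧) (n : ℕ) :
    coeff (n + 1) (lagrangeSeries U G) = coeff n (U ^ (n + 1) * d⁄dX K G) / (n + 1) :=
  coeff_mk _ _

theorem lagrangeSeries_of_constantCoeff_eq_zero {U : K⟦X⟧} (hU : constantCoeff U = 0)
    (G : K⟦X⟧) : lagrangeSeries U G = C (constantCoeff G) := by
  obtain ⟨V, rfl⟩ := X_dvd_iff.2 hU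
  ext (_ | n)
  · simp [constantCoeff_lagrangeSeries]
  · simp [coeff_succ_lagrangeSeries, mul_pow, mul_assoc, coeff_X_pow_mul']

variable [CharZero K]

theorem lagrangeSeries_X (U : K⟦X⟧) : lagrangeSeries U X = X * lagrangeSeries U U := by
  ext (_ | _ | n)
  · simp [constantCoeff_lagrangeSeries]
  · simp [coeff_succ_lagrangeSeries, coeff_succ_X_mul, constantCoeff_lagrangeSeries]
  · have h := coeff_succ_pow_succ_mul U n (n + 1)
    rw [coeff_succ_X_mul, coeff_succ_lagrangeSeries, coeff_succ_lagrangeSeries, derivative_X,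
      mul_one, div_eq_div_iff (Nat.cast_add_one_ne_zero _) (Nat.cast_add_one_ne_zero _), h,
      mul_comm]

theorem coeff_pow_succ_mul_derivative_X_mul_inv {U : K⟦X⟧} (hU : constantCoeff U ≠ 0) (n : ℕ) :
    coeff n (U ^ (n + 1) * d⁄dX K (X * U⁻¹)) = if n = 0 then 1 else 0 := by
  have hUi : U * U⁻¹ = 1 := PowerSeries.mul_inv_cancel U hU
  have hd : U * d⁄dX K (X * U⁻¹) = 1 - X * (U⁻¹ * d⁄dX K U) := by
    simp only [Derivation.leibniz, derivative_X, derivative_inv', smul_eq_mul]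
    linear_combination (1 - X * U⁻¹ * d⁄dX K U) * hUi
  rw [pow_succ, mul_assoc, hd]
  cases n with
  | zero => simp
  | succ m =>
    have hpow : U ^ (m + 1) * (1 - X * (U⁻¹ * d⁄dX K U)) =
        U ^ (m + 1) - X * (U ^ m * d⁄dX K U) := by
      linear_combination -X * U ^ m * d⁄dX K U * hUi
    have hcoeff : coeff (m + 1) (U ^ (m + 1)) = coeff m (U ^ m * d⁄dX K U) :=
      mul_right_cancel₀ (Nat.cast_add_one_ne_zero m)
        ((coeff_succ_pow_succ_mul U m m).trans (mul_comm _ _))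
    rw [hpow, map_sub, coeff_succ_X_mul, hcoeff, sub_self, if_neg m.succ_ne_zero]

/-- The formal counterpart of the change of variables `s = X / U(X)` in the residue of
`F(s) ds / s ^ (n + 1)`. -/
theorem coeff_pow_succ_mul_subst_mul_derivative {U : K⟦X⟧} (hU : constantCoeff U ≠ 0)
    (F : K⟦X⟧) (n : ℕ) :
    coeff n (U ^ (n + 1) * (F.subst (X * U⁻¹) * d⁄dX K (X * U⁻¹))) = coeff n F := by
  have hφ : constantCoeff (X * U⁻¹) = 0 := by simp
  have hUi : U * U⁻¹ = 1 := PowerSeries.mul_inv_cancel U hU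
  induction n generalizing F with
  | zero =>
    have h := coeff_pow_succ_mul_derivative_X_mul_inv hU 0
    rw [if_pos rfl, coeff_zero_eq_constantCoeff_apply] at h
    rw [mul_left_comm, coeff_zero_eq_constantCoeff_apply, coeff_zero_eq_constantCoeff_apply,
      map_mul, h, mul_one, constantCoeff_subst_of_constantCoeff_eq_zero hφ]
  | succ n ih =>
    obtain ⟨F₁, c, rfl⟩ : ∃ F₁ c, F = X * F₁ + C c := ⟨_, _, F.eq_X_mul_shift_add_const⟩
    have hsplit : U ^ (n + 1 + 1) * ((X * F₁ + C c).subst (X * U⁻¹) * d⁄dX K (X * U⁻¹)) =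
        X * (U ^ (n + 1) * (F₁.subst (X * U⁻¹) * d⁄dX K (X * U⁻¹))) +
          C c * (U ^ (n + 1 + 1) * d⁄dX K (X * U⁻¹)) := by
      rw [subst_X_mul_add_C hφ]
      linear_combination
        X * U ^ (n + 1) * F₁.subst (X * U⁻¹) * d⁄dX K (X * U⁻¹) * hUi
    rw [hsplit, map_add, coeff_succ_X_mul, ih, coeff_C_mul,
      coeff_pow_succ_mul_derivative_X_mul_inv hU, if_neg n.succ_ne_zero]
    simp [coeff_succ_X_mul]

theorem lagrangeSeries_eq_subst_substInvOfIsUnit {U : K⟦X⟧} (hU : constantCoeff U ≠ 0)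
    (hφ : IsUnit (coeff 1 (X * U⁻¹))) (G : K⟦X⟧) :
    lagrangeSeries U G = G.subst (substInvOfIsUnit (X * U⁻¹) hφ) := by
  set ψ : K⟦X⟧ := substInvOfIsUnit (X * U⁻¹) hφ
  have hsφ : HasSubst (X * U⁻¹ : K⟦X⟧) := .of_constantCoeff_zero' (by simp)
  have hsψ : HasSubst ψ := .substInvOfIsUnit _ hφ
  have hψφ : ψ.subst (X * U⁻¹ : K⟦X⟧) = X := subst_substInvOfIsUnit_left _ (by simp) hφ
  have hG : subst (X * U⁻¹ : K⟦X⟧) (G.subst ψ : K⟦X⟧) = G := by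
    rw [subst_comp_subst_apply hsψ hsφ, hψφ, X_subst]
  ext (_ | n)
  · rw [coeff_zero_eq_constantCoeff_apply, coeff_zero_eq_constantCoeff_apply,
      constantCoeff_lagrangeSeries, constantCoeff_subst_of_constantCoeff_eq_zero
        (constantCoeff_substInvOfIsUnit _ hφ)]
  · have h := coeff_pow_succ_mul_subst_mul_derivative hU (d⁄dX K (G.subst ψ)) n
    rw [← derivative_subst hsφ, hG, coeff_derivative] at h
    rw [coeff_succ_lagrangeSeries, h, mul_div_cancel_right₀ _ (Nat.cast_add_one_ne_zero n)]

theorem lagrangeSeries_eq_subst (U G : K⟦X⟧) :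
    lagrangeSeries U G = G.subst (lagrangeSeries U X) := by
  by_cases hU : constantCoeff U = 0
  · rw [lagrangeSeries_of_constantCoeff_eq_zero hU, lagrangeSeries_of_constantCoeff_eq_zero hU,
      constantCoeff_X, map_zero, subst_zero_eq_C_constantCoeff]
    rfl
  · have hφ : IsUnit (coeff 1 (X * U⁻¹)) := by simpa [coeff_succ_X_mul (n := 0)] using hU
    rw [lagrangeSeries_eq_subst_substInvOfIsUnit hU hφ,
      lagrangeSeries_eq_subst_substInvOfIsUnit hU hφ, subst_X (.substInvOfIsUnit _ hφ)]

end FormalInversion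

section Evaluation

open PowerSeries

theorem coeff_mul_mul_pow {A : Type*} [CommSemiring A] (F G : A⟦X⟧) (z : A) (n : ℕ) :
    coeff n (F * G) * z ^ n = ∑ kl ∈ Finset.HasAntidiagonal.antidiagonal n,
      coeff kl.1 F * z ^ kl.1 * (coeff kl.2 G * z ^ kl.2) := by
  rw [coeff_mul, Finset.sum_mul]
  refine Finset.sum_congr rfl fun kl hkl ↦ ?_
  rw [← Finset.HasAntidiagonal.mem_antidiagonal.1 hkl, pow_add, mul_mul_mul_comm]

variable {A : Type*} [NormedCommRing A] {F G : A⟦X⟧} {z : A}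

theorem summable_norm_coeff_mul (hF : Summable fun n ↦ ‖coeff n F * z ^ n‖)
    (hG : Summable fun n ↦ ‖coeff n G * z ^ n‖) :
    Summable fun n ↦ ‖coeff n (F * G) * z ^ n‖ := by
  simp only [coeff_mul_mul_pow]
  exact (summable_norm_sum_mul_antidiagonal_of_summable_norm hF hG :)

theorem tsum_norm_coeff_mul_le (hF : Summable fun n ↦ ‖coeff n F * z ^ n‖)
    (hG : Summable fun n ↦ ‖coeff n G * z ^ n‖) :
    ∑' n, ‖coeff n (F * G) * z ^ n‖ ≤
      (∑' n, ‖coeff n F * z ^ n‖) * ∑' n, ‖coeff n G * z ^ n‖ := by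
  have hF' := hF.norm
  have hG' := hG.norm
  rw [tsum_mul_tsum_eq_tsum_sum_antidiagonal_of_summable_norm hF' hG']
  refine (summable_norm_coeff_mul hF hG).tsum_le_tsum (fun n ↦ ?_)
    (summable_norm_sum_mul_antidiagonal_of_summable_norm hF' hG').of_norm
  rw [coeff_mul_mul_pow]
  exact norm_sum_le_of_le _ fun kl _ ↦ norm_mul_le _ _

theorem summable_norm_coeff_pow (hF : Summable fun n ↦ ‖coeff n F * z ^ n‖) (p : ℕ) :
    Summable fun n ↦ ‖coeff n (F ^ p) * z ^ n‖ := by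
  induction p with
  | zero =>
    refine summable_of_ne_finset_zero (s := {0}) fun n hn ↦ ?_
    simp_all [coeff_one]
  | succ p ih => exact pow_succ F p ▸ summable_norm_coeff_mul ih hF

theorem tsum_norm_coeff_pow_le [NormOneClass A] (hF : Summable fun n ↦ ‖coeff n F * z ^ n‖)
    (p : ℕ) : ∑' n, ‖coeff n (F ^ p) * z ^ n‖ ≤ (∑' n, ‖coeff n F * z ^ n‖) ^ p := by
  induction p with
  | zero =>
    rw [tsum_eq_single 0 fun n hn ↦ by simp [coeff_one, hn]]
    simp
  | succ p ih =>
    rw [pow_succ, pow_succ]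
    exact (tsum_norm_coeff_mul_le (summable_norm_coeff_pow hF p) hF).trans
      (mul_le_mul_of_nonneg_right ih (tsum_nonneg fun _ ↦ norm_nonneg _))

variable [CompleteSpace A]

theorem tsum_coeff_mul (hF : Summable fun n ↦ ‖coeff n F * z ^ n‖)
    (hG : Summable fun n ↦ ‖coeff n G * z ^ n‖) :
    ∑' n, coeff n (F * G) * z ^ n = (∑' n, coeff n F * z ^ n) * ∑' n, coeff n G * z ^ n := by
  simp only [coeff_mul_mul_pow]
  exact (tsum_mul_tsum_eq_tsum_sum_antidiagonal_of_summable_norm hF hG).symm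

theorem tsum_coeff_pow (hF : Summable fun n ↦ ‖coeff n F * z ^ n‖) (p : ℕ) :
    ∑' n, coeff n (F ^ p) * z ^ n = (∑' n, coeff n F * z ^ n) ^ p := by
  induction p with
  | zero =>
    rw [tsum_eq_single 0 fun n hn ↦ by simp [coeff_one, hn]]
    simp
  | succ p ih => rw [pow_succ, pow_succ, tsum_coeff_mul (summable_norm_coeff_pow hF p) hF, ih]

theorem summable_coeff_mul_coeff_pow_mul_pow [NormOneClass A]
    (hF : Summable fun n ↦ ‖coeff n F * z ^ n‖)
    (hG : Summable fun p ↦ ‖coeff p G‖ * (∑' n, ‖coeff n F * z ^ n‖) ^ p) :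
    Summable fun x : ℕ × ℕ ↦ coeff x.1 G * (coeff x.2 (F ^ x.1) * z ^ x.2) := by
  have hrow (p : ℕ) : Summable fun n ↦ ‖coeff p G‖ * ‖coeff n (F ^ p) * z ^ n‖ :=
    (summable_norm_coeff_pow hF p).mul_left _
  have hprod : Summable fun x : ℕ × ℕ ↦ ‖coeff x.1 G‖ * ‖coeff x.2 (F ^ x.1) * z ^ x.2‖ := by
    refine (summable_prod_of_nonneg fun x ↦ by positivity).2 ⟨hrow, ?_⟩
    refine hG.of_nonneg_of_le (fun p ↦ tsum_nonneg fun n ↦ by positivity) fun p ↦ ?_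
    dsimp only
    rw [tsum_mul_left]
    exact mul_le_mul_of_nonneg_left (tsum_norm_coeff_pow_le hF p) (norm_nonneg _)
  exact hprod.of_norm_bounded fun x ↦ norm_mul_le _ _

theorem hasSum_coeff_subst [NormOneClass A] (hF0 : constantCoeff F = 0)
    (hF : Summable fun n ↦ ‖coeff n F * z ^ n‖)
    (hG : Summable fun p ↦ ‖coeff p G‖ * (∑' n, ‖coeff n F * z ^ n‖) ^ p) :
    HasSum (fun n ↦ coeff n (G.subst F : A⟦X⟧) * z ^ n)
      (∑' p, coeff p G * (∑' n, coeff n F * z ^ n) ^ p) := by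
  have hsum := summable_coeff_mul_coeff_pow_mul_pow hF hG
  have hrow (p : ℕ) : HasSum (fun n ↦ coeff p G * (coeff n (F ^ p) * z ^ n))
      (coeff p G * (∑' n, coeff n F * z ^ n) ^ p) :=
    tsum_coeff_pow hF p ▸ (summable_norm_coeff_pow hF p).of_norm.hasSum.mul_left _
  have hcol (n : ℕ) : HasSum (fun p ↦ coeff p G * (coeff n (F ^ p) * z ^ n))
      (coeff n (G.subst F : A⟦X⟧) * z ^ n) := by
    have hs : HasSubst F := .of_constantCoeff_zero' hF0
    have hfin := coeff_subst_finite' hs G n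
    simp only [smul_eq_mul] at hfin
    simp only [coeff_subst' hs, smul_eq_mul, ← mul_assoc]
    rw [← tsum_eq_finsum (L := .unconditional ℕ) hfin]
    exact (summable_of_hasFiniteSupport hfin).hasSum.mul_right _
  rw [(hsum.hasSum.prod_fiberwise hrow).tsum_eq]
  exact ((Equiv.prodComm ℕ ℕ).hasSum_iff.2 hsum.hasSum).prod_fiberwise hcol

end Evaluation

section Convergence

open PowerSeries

section NormedCommRing

variable {A : Type*} [NormedCommRing A] {U : A⟦X⟧} {N R : ℝ}

theorem norm_coeff_pow_succ_le (hU : ∀ p, ‖coeff p U‖ ≤ N * R ^ p) (n p : ℕ) :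
    ‖coeff p (U ^ (n + 1))‖ ≤ N ^ (n + 1) * R ^ p * (p + n).choose n := by
  induction n generalizing p with
  | zero => simpa using hU p
  | succ n ih =>
    rw [pow_succ, coeff_mul]
    calc _ ≤ ∑ ij ∈ Finset.HasAntidiagonal.antidiagonal p,
            N ^ (n + 1) * R ^ ij.1 * (ij.1 + n).choose n * (N * R ^ ij.2) :=
          norm_sum_le_of_le _ fun ij _ ↦ norm_mul_le_of_le (ih ij.1) (hU ij.2)
      _ = ∑ ij ∈ Finset.HasAntidiagonal.antidiagonal p,
            N ^ (n + 2) * R ^ p * (ij.1 + n).choose n := by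
          refine Finset.sum_congr rfl fun ij hij ↦ ?_
          rw [← Finset.HasAntidiagonal.mem_antidiagonal.1 hij]
          ring
      _ = N ^ (n + 2) * R ^ p * (p + (n + 1)).choose (n + 1) := by
          rw [← Finset.mul_sum, ← Nat.cast_sum, Finset.Nat.sum_antidiagonal_eq_sum_range_succ_mk,
            Nat.sum_range_add_choose, add_assoc]

theorem nonneg_of_norm_coeff_le (hU : ∀ p, ‖coeff p U‖ ≤ N * R ^ p) : 0 ≤ N := by
  simpa using (norm_nonneg _).trans (hU 0)

end NormedCommRing

variable {𝕜 : Type*} [RCLike 𝕜] {U G : 𝕜⟦X⟧} {N M R S : ℝ} {z : 𝕜}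

theorem norm_coeff_succ_lagrangeSeries_X_le (hR : 0 ≤ R) (hU : ∀ p, ‖coeff p U‖ ≤ N * R ^ p)
    (n : ℕ) : ‖coeff (n + 1) (lagrangeSeries U X)‖ ≤ N * (4 * N * R) ^ n := by
  have hN : 0 ≤ N := nonneg_of_norm_coeff_le hU
  have hchoose : ((n + n).choose n : ℝ) ≤ 4 ^ n := by
    rw [← two_mul, show (4 : ℝ) = 2 ^ 2 by norm_num, ← pow_mul]
    exact_mod_cast Nat.choose_le_two_pow (2 * n) n
  calc ‖coeff (n + 1) (lagrangeSeries U X)‖ = ‖coeff n (U ^ (n + 1))‖ / (n + 1) := by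
        rw [coeff_succ_lagrangeSeries, derivative_X, mul_one, norm_div]
        norm_cast
    _ ≤ ‖coeff n (U ^ (n + 1))‖ := div_le_self (norm_nonneg _) (by simp)
    _ ≤ N ^ (n + 1) * R ^ n * (n + n).choose n := norm_coeff_pow_succ_le hU n n
    _ ≤ N ^ (n + 1) * R ^ n * 4 ^ n := by gcongr
    _ = N * (4 * N * R) ^ n := by ring

theorem norm_coeff_succ_lagrangeSeries_X_mul_pow_le (hR : 0 ≤ R)
    (hU : ∀ p, ‖coeff p U‖ ≤ N * R ^ p) (z : 𝕜) (n : ℕ) :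
    ‖coeff (n + 1) (lagrangeSeries U X) * z ^ (n + 1)‖ ≤
      N * ‖z‖ * (4 * N * R * ‖z‖) ^ n := by
  rw [norm_mul, norm_pow]
  calc _ ≤ N * (4 * N * R) ^ n * ‖z‖ ^ (n + 1) := by
        gcongr
        exact norm_coeff_succ_lagrangeSeries_X_le hR hU n
    _ = N * ‖z‖ * (4 * N * R * ‖z‖) ^ n := by ring

theorem summable_norm_coeff_lagrangeSeries_X (hR : 0 ≤ R) (hU : ∀ p, ‖coeff p U‖ ≤ N * R ^ p)
    (hz : 4 * N * R * ‖z‖ < 1) :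
    Summable fun n ↦ ‖coeff n (lagrangeSeries U X) * z ^ n‖ := by
  have hN : 0 ≤ N := nonneg_of_norm_coeff_le hU
  refine (summable_nat_add_iff 1).1 (Summable.of_nonneg_of_le (fun n ↦ norm_nonneg _)
    (norm_coeff_succ_lagrangeSeries_X_mul_pow_le hR hU z) ?_)
  exact (summable_geometric_of_lt_one (by positivity) hz).mul_left _

theorem tsum_norm_coeff_lagrangeSeries_X_le (hR : 0 ≤ R) (hU : ∀ p, ‖coeff p U‖ ≤ N * R ^ p)
    (hz : 4 * N * R * ‖z‖ < 1) :
    ∑' n, ‖coeff n (lagrangeSeries U X) * z ^ n‖ ≤ N * ‖z‖ / (1 - 4 * N * R * ‖z‖) := by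
  have hN : 0 ≤ N := nonneg_of_norm_coeff_le hU
  have hsum := summable_norm_coeff_lagrangeSeries_X hR hU hz
  have hgeom := hasSum_geometric_of_lt_one (by positivity) hz
  have h0 : ‖coeff 0 (lagrangeSeries U X) * z ^ 0‖ = 0 := by
    simp [constantCoeff_lagrangeSeries]
  rw [hsum.tsum_eq_zero_add, h0, zero_add, div_eq_mul_inv]
  exact hasSum_le (norm_coeff_succ_lagrangeSeries_X_mul_pow_le hR hU z)
    ((summable_nat_add_iff 1).2 hsum).hasSum (hgeom.mul_left _)

theorem mul_tsum_norm_coeff_lagrangeSeries_X_lt_one (hR : 0 ≤ R) (hS : 0 ≤ S)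
    (hU : ∀ p, ‖coeff p U‖ ≤ N * R ^ p) (hz : N * (4 * R + S) * ‖z‖ < 1) :
    S * ∑' n, ‖coeff n (lagrangeSeries U X) * z ^ n‖ < 1 := by
  have hN : 0 ≤ N := nonneg_of_norm_coeff_le hU
  have hNS : 0 ≤ N * S * ‖z‖ := by positivity
  have hz' : 4 * N * R * ‖z‖ < 1 := by linarith
  calc _ ≤ S * (N * ‖z‖ / (1 - 4 * N * R * ‖z‖)) :=
        mul_le_mul_of_nonneg_left (tsum_norm_coeff_lagrangeSeries_X_le hR hU hz') hS
    _ < 1 := by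
        rw [← mul_div_assoc, div_lt_one (by linarith)]
        linarith

theorem tsum_coeff_lagrangeSeries_X (hR : 0 ≤ R) (hU : ∀ p, ‖coeff p U‖ ≤ N * R ^ p)
    (hz : 4 * N * R * ‖z‖ < 1) :
    ∑' n, coeff n (lagrangeSeries U X) * z ^ n =
      z * ∑' n, coeff n (lagrangeSeries U U) * z ^ n := by
  rw [(summable_norm_coeff_lagrangeSeries_X hR hU hz).of_norm.tsum_eq_zero_add,
    lagrangeSeries_X, coeff_zero_X_mul, zero_mul, zero_add, ← tsum_mul_left]
  simp only [coeff_succ_X_mul, pow_succ', mul_left_comm]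

theorem hasSum_coeff_lagrangeSeries (hR : 0 ≤ R) (hS : 0 ≤ S)
    (hU : ∀ p, ‖coeff p U‖ ≤ N * R ^ p) (hG : ∀ p, ‖coeff p G‖ ≤ M * S ^ p)
    (hz : N * (4 * R + S) * ‖z‖ < 1) :
    HasSum (fun n ↦ coeff n (lagrangeSeries U G) * z ^ n)
      (∑' p, coeff p G * (∑' n, coeff n (lagrangeSeries U X) * z ^ n) ^ p) := by
  have hN : 0 ≤ N := nonneg_of_norm_coeff_le hU
  have hNS : 0 ≤ N * S * ‖z‖ := by positivity
  have hw := mul_tsum_norm_coeff_lagrangeSeries_X_lt_one hR hS hU hz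
  set w := ∑' n, ‖coeff n (lagrangeSeries U X) * z ^ n‖
  have hw0 : 0 ≤ w := tsum_nonneg fun n ↦ norm_nonneg _
  rw [lagrangeSeries_eq_subst U G]
  refine hasSum_coeff_subst (by rw [constantCoeff_lagrangeSeries, constantCoeff_X])
    (summable_norm_coeff_lagrangeSeries_X hR hU (by linarith)) ?_
  refine .of_nonneg_of_le (fun p ↦ by positivity) (fun p ↦ ?_)
    ((summable_geometric_of_lt_one (mul_nonneg hS hw0) hw).mul_left M)
  rw [mul_pow, ← mul_assoc]
  exact mul_le_mul_of_nonneg_right (hG p) (by positivity)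

end Convergence

section Taylor

open PowerSeries

section Remainder

variable {E : Type*} [NormedAddCommGroup E] [NormedSpace ℝ E] {f : ℝ → E} {s : Set ℝ}
  {C r t x : ℝ}

theorem norm_sub_taylorWithinEval_le (hs : Convex ℝ s) (hs' : UniqueDiffOn ℝ s)
    (hf : ContDiffOn ℝ (⊤ : ℕ∞) f s)
    (hC : ∀ p, ∀ y ∈ s, ‖taylorCoeffWithin f p s y‖ ≤ C * r ^ p) (ht : t ∈ s) (hx : x ∈ s)
    (n : ℕ) : ‖f x - taylorWithinEval f n s t x‖ ≤ C * ((n + 1 : ℕ) * (r * |x - t|) ^ (n + 1)) := by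
  have hsub : Set.uIcc t x ⊆ s := hs.ordConnected.uIcc_subset ht hx
  have hderiv (y : ℝ) (hy : y ∈ Set.uIcc t x) :
      HasDerivWithinAt (fun y ↦ taylorWithinEval f n s y x)
        (((n ! : ℝ)⁻¹ * (x - y) ^ n) • iteratedDerivWithin (n + 1) f s y) (Set.uIcc t x) y :=
    (hasDerivWithinAt_taylorWithinEval hs' self_mem_nhdsWithin (hsub hy) subset_rfl
      (hf.of_le (mod_cast le_top))
      (hf.differentiableOn_iteratedDerivWithin (mod_cast WithTop.coe_lt_top _) hs' _
        (hsub hy))).mono hsub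
  have hbound (y : ℝ) (hy : y ∈ Set.uIcc t x) :
      ‖((n ! : ℝ)⁻¹ * (x - y) ^ n) • iteratedDerivWithin (n + 1) f s y‖ ≤
        |x - t| ^ n * ((n + 1 : ℕ) * (C * r ^ (n + 1))) := by
    have hcoeff : ((n ! : ℝ)⁻¹ * (x - y) ^ n) • iteratedDerivWithin (n + 1) f s y =
        ((x - y) ^ n * (n + 1 : ℕ)) • taylorCoeffWithin f (n + 1) s y := by
      rw [taylorCoeffWithin, smul_smul, Nat.factorial_succ]
      congr 1
      push_cast
      field_simp
    have hxy : |x - y| ≤ |x - t| := by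
      simpa only [abs_sub_comm] using Set.abs_sub_right_of_mem_uIcc hy
    rw [hcoeff, norm_smul, norm_mul, norm_pow, Real.norm_eq_abs, Real.norm_natCast, mul_assoc]
    gcongr
    exact hC _ _ (hsub hy)
  have hmv := (convex_uIcc t x).norm_image_sub_le_of_norm_hasDerivWithin_le hderiv hbound
    Set.left_mem_uIcc Set.right_mem_uIcc
  rw [taylorWithinEval_self, Real.norm_eq_abs] at hmv
  exact hmv.trans_eq (by ring)

theorem hasSum_taylorCoeffWithin (hs : Convex ℝ s) (hs' : UniqueDiffOn ℝ s)
    (hf : ContDiffOn ℝ (⊤ : ℕ∞) f s) (hr : 0 ≤ r)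
    (hC : ∀ p, ∀ y ∈ s, ‖taylorCoeffWithin f p s y‖ ≤ C * r ^ p) (ht : t ∈ s) (hx : x ∈ s)
    (hxt : r * |x - t| < 1) :
    HasSum (fun p ↦ (x - t) ^ p • taylorCoeffWithin f p s t) (f x) := by
  have hq : 0 ≤ r * |x - t| := by positivity
  have hsum : Summable fun p ↦ ‖(x - t) ^ p • taylorCoeffWithin f p s t‖ := by
    refine .of_nonneg_of_le (fun p ↦ norm_nonneg _) (fun p ↦ ?_)
      ((summable_geometric_of_lt_one hq hxt).mul_left C)
    rw [norm_smul, norm_pow, Real.norm_eq_abs, mul_pow, mul_left_comm, mul_comm (|x - t| ^ p)]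
    exact (mul_le_mul_of_nonneg_right (hC p t ht) (by positivity)).trans_eq (by ring)
  have hrem : Filter.Tendsto (fun n : ℕ ↦ C * ((n + 1 : ℕ) * (r * |x - t|) ^ (n + 1)))
      Filter.atTop (nhds 0) := by
    simpa using ((tendsto_self_mul_const_pow_of_lt_one hq hxt).comp
      (Filter.tendsto_add_atTop_nat 1)).const_mul C
  have htaylor (n : ℕ) : taylorWithinEval f n s t x =
      ∑ p ∈ Finset.range (n + 1), (x - t) ^ p • taylorCoeffWithin f p s t := by
    simp only [taylor_within_apply, taylorCoeffWithin, smul_smul, mul_comm]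
  rw [hasSum_iff_tendsto_nat_of_summable_norm hsum, ← Filter.tendsto_add_atTop_iff_nat 1,
    tendsto_iff_norm_sub_tendsto_zero]
  refine squeeze_zero (fun n ↦ norm_nonneg _) (fun n ↦ ?_) hrem
  rw [← htaylor, norm_sub_rev]
  exact norm_sub_taylorWithinEval_le hs hs' hf hC ht hx n

end Remainder

variable {A : Type*} [NormedCommRing A] [NormedAlgebra ℝ A] {f g : ℝ → A} {s : Set ℝ} {x : ℝ}

/-- The formal Taylor series at `x` of a function on `s`, whose derivatives at `x` are taken
within `s`. -/
noncomputable def taylorPowerSeries (f : ℝ → A) (s : Set ℝ) (x : ℝ) : A⟦X⟧ :=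
  mk fun n ↦ taylorCoeffWithin f n s x

theorem coeff_taylorPowerSeries (f : ℝ → A) (s : Set ℝ) (x : ℝ) (n : ℕ) :
    coeff n (taylorPowerSeries f s x) = taylorCoeffWithin f n s x :=
  coeff_mk _ _

theorem taylorPowerSeries_mul (hs : UniqueDiffOn ℝ s) (hx : x ∈ s)
    (hf : ContDiffWithinAt ℝ (⊤ : ℕ∞) f s x) (hg : ContDiffWithinAt ℝ (⊤ : ℕ∞) g s x) :
    taylorPowerSeries (f * g) s x = taylorPowerSeries f s x * taylorPowerSeries g s x := by
  ext n
  simp only [coeff_mul, coeff_taylorPowerSeries, taylorCoeffWithin]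
  rw [Finset.Nat.sum_antidiagonal_eq_sum_range_succ_mk,
    iteratedDerivWithin_mul hx hs (hf.of_le (mod_cast le_top)) (hg.of_le (mod_cast le_top)),
    Finset.smul_sum]
  refine Finset.sum_congr rfl fun i hi ↦ ?_
  have hchoose : (n ! : ℝ)⁻¹ * n.choose i = (i ! : ℝ)⁻¹ * ((n - i)! : ℝ)⁻¹ := by
    rw [Nat.cast_choose ℝ (Finset.mem_range_succ_iff.1 hi)]
    field_simp
  rw [smul_mul_smul_comm, ← hchoose, mul_assoc, ← nsmul_eq_mul, ← Nat.cast_smul_eq_nsmul ℝ,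
    smul_smul]

theorem taylorPowerSeries_pow (hs : UniqueDiffOn ℝ s) (hx : x ∈ s)
    (hf : ContDiffWithinAt ℝ (⊤ : ℕ∞) f s x) (n : ℕ) :
    taylorPowerSeries (f ^ n) s x = taylorPowerSeries f s x ^ n := by
  induction n with
  | zero =>
    ext (_ | p)
    · simp [coeff_taylorPowerSeries, taylorCoeffWithin]
    · simp [coeff_taylorPowerSeries, taylorCoeffWithin, coeff_one, Pi.one_def,
        iteratedDerivWithin_const]
  | succ n ih =>
    have hfn : ContDiffWithinAt ℝ (⊤ : ℕ∞) (f ^ n) s x := hf.pow n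
    rw [pow_succ, taylorPowerSeries_mul hs hx hfn hf, ih, pow_succ]

theorem taylorPowerSeries_derivWithin (f : ℝ → A) (s : Set ℝ) (x : ℝ) :
    taylorPowerSeries (derivWithin f s) s x = d⁄dX A (taylorPowerSeries f s x) := by
  ext n
  rw [coeff_derivative, coeff_taylorPowerSeries, coeff_taylorPowerSeries, taylorCoeffWithin,
    taylorCoeffWithin, iteratedDerivWithin_succ', Nat.factorial_succ, mul_comm, ← Nat.cast_add_one,
    ← nsmul_eq_mul, ← Nat.cast_smul_eq_nsmul ℝ, smul_smul]
  congr 1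
  push_cast
  field_simp

end Taylor

section LagrangeInversion

open PowerSeries

variable {J : Set ℝ} {R S t x : ℝ} {u g h : ℝ → ℂ}

theorem norm_taylorCoeffWithin_le_anorm (hR : 0 < R) (hN : anorm J R h ≠ ⊤) (p : ℕ)
    (ht : t ∈ J) : ‖taylorCoeffWithin h p J t‖ ≤ (anorm J R h).toReal * R ^ p := by
  have hpos : 0 < (p ! : ℝ) * R ^ p := by positivity
  have hle : (‖iteratedDerivWithin p h J t‖₊ : ℝ≥0∞) / ENNReal.ofReal (p ! * R ^ p) ≤
      anorm J R h :=
    le_iSup_of_le p (ENNReal.div_le_div_right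
      (le_iSup₂_of_le (f := fun t _ ↦ (‖iteratedDerivWithin p h J t‖₊ : ℝ≥0∞)) t ht le_rfl) _)
  have hreal := ENNReal.toReal_mono hN hle
  rw [ENNReal.toReal_div, ENNReal.toReal_ofReal hpos.le, ENNReal.coe_toReal, coe_nnnorm,
    div_le_iff₀ hpos] at hreal
  rw [taylorCoeffWithin, norm_smul, norm_inv, Real.norm_natCast, inv_mul_le_iff₀ (by positivity)]
  exact hreal.trans_eq (by ring)

theorem norm_coeff_taylorPowerSeries_le_anorm (hR : 0 < R) (hN : anorm J R h ≠ ⊤) (ht : t ∈ J)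
    (p : ℕ) : ‖coeff p (taylorPowerSeries h J t)‖ ≤ (anorm J R h).toReal * R ^ p := by
  rw [coeff_taylorPowerSeries]
  exact norm_taylorCoeffWithin_le_anorm hR hN p ht

theorem hasSum_coeff_taylorPowerSeries (hJ : Convex ℝ J) (hJ' : UniqueDiffOn ℝ J) (hR : 0 < R)
    (hh : ContDiffOn ℝ (⊤ : ℕ∞) h J) (hN : anorm J R h ≠ ⊤) (ht : t ∈ J) (hx : x ∈ J)
    (hxt : R * |x - t| < 1) :
    HasSum (fun p ↦ coeff p (taylorPowerSeries h J t) * ((x - t : ℝ) : ℂ) ^ p) (h x) := by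
  simp only [coeff_taylorPowerSeries, ← Complex.ofReal_pow,
    mul_comm (taylorCoeffWithin _ _ _ _), ← Complex.real_smul]
  exact hasSum_taylorCoeffWithin hJ hJ' hh hR.le
    (fun p y hy ↦ norm_taylorCoeffWithin_le_anorm hR hN p hy) ht hx hxt

theorem lag_div_factorial (hJ : UniqueDiffOn ℝ J) (hu : ContDiffOn ℝ (⊤ : ℕ∞) u J)
    (hg : ContDiffOn ℝ (⊤ : ℕ∞) g J) (ht : t ∈ J) (n : ℕ) :
    lag J u g n t / n ! =
      coeff n (lagrangeSeries (taylorPowerSeries u J t) (taylorPowerSeries g J t)) := by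
  cases n with
  | zero =>
    rw [coeff_zero_eq_constantCoeff_apply, constantCoeff_lagrangeSeries,
      ← coeff_zero_eq_constantCoeff_apply, coeff_taylorPowerSeries]
    simp [lag, taylorCoeffWithin]
  | succ n =>
    have hu' : ContDiffOn ℝ (⊤ : ℕ∞) (u ^ (n + 1)) J := hu.pow (n + 1)
    have hg' : ContDiffOn ℝ (⊤ : ℕ∞) (derivWithin g J) J := hg.derivWithin hJ (by simp)
    rw [coeff_succ_lagrangeSeries, ← taylorPowerSeries_pow hJ ht (hu t ht),
      ← taylorPowerSeries_derivWithin, ← taylorPowerSeries_mul hJ ht (hu' t ht) (hg' t ht),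
      coeff_taylorPowerSeries, taylorCoeffWithin, lag, Nat.factorial_succ, Complex.real_smul]
    push_cast
    field_simp

theorem pow_div_factorial_mul_lag (hJ : UniqueDiffOn ℝ J) (hu : ContDiffOn ℝ (⊤ : ℕ∞) u J)
    (hg : ContDiffOn ℝ (⊤ : ℕ∞) g J) (ht : t ∈ J) (z : ℂ) (n : ℕ) :
    z ^ n / n ! * lag J u g n t =
      coeff n (lagrangeSeries (taylorPowerSeries u J t) (taylorPowerSeries g J t)) * z ^ n := by
  rw [← lag_div_factorial hJ hu hg ht, div_mul_comm]

theorem Lser_eq_tsum_coeff (hJ : UniqueDiffOn ℝ J) (hu : ContDiffOn ℝ (⊤ : ℕ∞) u J)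
    (hg : ContDiffOn ℝ (⊤ : ℕ∞) g J) (ht : t ∈ J) (z : ℂ) :
    Lser J u g z t = ∑' n,
      coeff n (lagrangeSeries (taylorPowerSeries u J t) (taylorPowerSeries g J t)) * z ^ n :=
  tsum_congr (pow_div_factorial_mul_lag hJ hu hg ht z)

theorem hasSum_lag_of_eq_add_mul_Lser (hJ : Convex ℝ J) (hJ' : UniqueDiffOn ℝ J) (hR : 0 < R)
    (hS : 0 < S) (hu : ContDiffOn ℝ (⊤ : ℕ∞) u J) (hg : ContDiffOn ℝ (⊤ : ℕ∞) g J)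
    (hNu : anorm J R u ≠ ⊤) (hNg : anorm J S g ≠ ⊤) (ht : t ∈ J) {z : ℂ}
    (hz : (anorm J R u).toReal * (4 * R + S) * ‖z‖ < 1) (hx : x ∈ J)
    (hxt : (x : ℂ) = t + z * Lser J u u z t) :
    HasSum (fun n : ℕ ↦ z ^ n / (n ! : ℂ) * lag J u g n t) (g x) := by
  set U := taylorPowerSeries u J t
  set G := taylorPowerSeries g J t
  have hU (p : ℕ) : ‖coeff p U‖ ≤ (anorm J R u).toReal * R ^ p :=
    norm_coeff_taylorPowerSeries_le_anorm hR hNu ht p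
  have hG (p : ℕ) : ‖coeff p G‖ ≤ (anorm J S g).toReal * S ^ p :=
    norm_coeff_taylorPowerSeries_le_anorm hS hNg ht p
  have hNS : 0 ≤ (anorm J R u).toReal * S * ‖z‖ := by positivity
  have hz' : 4 * (anorm J R u).toReal * R * ‖z‖ < 1 := by linarith
  set w := ∑' n, coeff n (lagrangeSeries U X) * z ^ n with hw
  have hxw : ((x - t : ℝ) : ℂ) = w := by
    rw [hw, tsum_coeff_lagrangeSeries_X hR.le hU hz', ← Lser_eq_tsum_coeff hJ' hu hu ht,
      Complex.ofReal_sub, hxt, add_sub_cancel_left]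
  have hw_le : ‖w‖ ≤ ∑' n, ‖coeff n (lagrangeSeries U X) * z ^ n‖ :=
    norm_tsum_le_tsum_norm (summable_norm_coeff_lagrangeSeries_X hR.le hU hz')
  have hxt_lt : S * |x - t| < 1 := by
    rw [← Real.norm_eq_abs, ← Complex.norm_real, hxw]
    exact (mul_le_mul_of_nonneg_left hw_le hS.le).trans_lt
      (mul_tsum_norm_coeff_lagrangeSeries_X_lt_one hR.le hS.le hU hz)
  have htaylor : HasSum (fun p ↦ coeff p G * w ^ p) (g x) := by
    rw [← hxw]
    exact hasSum_coeff_taylorPowerSeries hJ hJ' hS hg hNg ht hx hxt_lt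
  rw [← htaylor.tsum_eq]
  simpa only [pow_div_factorial_mul_lag hJ' hu hg ht] using
    hasSum_coeff_lagrangeSeries hR.le hS.le hU hG hz

end LagrangeInversion

theorem stmt19_general {J : Set ℝ} (hJ : Convex ℝ J) (hJ' : J.Nontrivial) {R S : ℝ} (hR : 0 < R)
    (hS : 0 < S) {u g : ℝ → ℂ} (hu : ContDiffOn ℝ (⊤ : ℕ∞) u J)
    (hg : ContDiffOn ℝ (⊤ : ℕ∞) g J) (hNu : anorm J R u ≠ ⊤) (hNg : anorm J S g ≠ ⊤) :
    (∀ t ∈ J, ∀ z : ℂ, (anorm J R u).toReal * (4 * R + S) * ‖z‖ < 1 →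
      ∀ x : ℝ, x ∈ J → (x : ℂ) = t + z * Lser J u u z t →
        HasSum (fun n : ℕ ↦ z ^ n / (n ! : ℂ) * lag J u g n t) (g x)) ∧
    (∀ t ∈ J, ∀ z : ℂ, (anorm J R u).toReal * (5 * R) * ‖z‖ < 1 →
      ∀ x : ℝ, x ∈ J → (x : ℂ) = t + z * Lser J u u z t → t + z * u x = x) := by
  have hJu : UniqueDiffOn ℝ J := uniqueDiffOn_convex hJ (hJ.nontrivial_iff_nonempty_interior.1 hJ')
  refine ⟨fun t ht z hz x hx hxt ↦
    hasSum_lag_of_eq_add_mul_Lser hJ hJu hR hS hu hg hNu hNg ht hz hx hxt, ?_⟩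
  intro t ht z hz x hx hxt
  have hux : Lser J u u z t = u x :=
    (hasSum_lag_of_eq_add_mul_Lser hJ hJu hR hR hu hu hNu hNu ht (by linarith) hx hxt).tsum_eq
  rw [hxt, hux]

theorem mul_lt_one_of_lt_one_div {c d r : ℝ} (hr : 0 ≤ r) (hcd : c ≤ d) (h : r < 1 / d) :
    c * r < 1 := by
  have hd : 0 < d := one_div_pos.1 (hr.trans_lt h)
  exact (mul_le_mul_of_nonneg_right hcd hr).trans_lt (mul_comm r d ▸ (lt_div_iff₀ hd).1 h)

theorem stmt19 (a b : ℝ) (hab : a < b) (J : Set ℝ) (hJ : J = Set.Icc a b)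
    (R S : ℝ) (hR : 0 < R) (hS : 0 < S)
    (u g : ℝ → ℂ) (hu : ContDiffOn ℝ (⊤ : ℕ∞) u J) (hg : ContDiffOn ℝ (⊤ : ℕ∞) g J)
    (hNu : anorm J R u ≠ ⊤) (hNg : anorm J S g ≠ ⊤)
    (T : ℝ) (hT : T = 2 * max R (2 * S)) :
    (∀ t ∈ J, ∀ z : ℂ, ‖z‖ < 1 / (4 * (anorm J R u).toReal * T) →
      ∀ x : ℝ, x ∈ J → (x : ℂ) = (t : ℂ) + z * Lser J u u z t →
        Lser J u g z t = g x) ∧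
    (∀ t ∈ J, ∀ z : ℝ, |z| < 1 / (16 * (anorm J R u).toReal * R) →
      ∀ x : ℝ, x ∈ J → (x : ℂ) = (t : ℂ) + (z : ℂ) * Lser J u u z t →
        (t : ℂ) + (z : ℂ) * u x = (x : ℂ)) ∧
    (∀ t ∈ J, ∀ z : ℝ, |z| < 1 / (8 * (anorm J R u).toReal * T) →
      ∀ x : ℝ, x ∈ J → (x : ℂ) = (t : ℂ) + (z : ℂ) * Lser J u u z t →
        g x = g t + ∑' n : ℕ, (z : ℂ) ^ (n + 1) / ((n + 1)! : ℂ) * lag J u g (n + 1) t) := by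
  subst hJ hT
  obtain ⟨hsum, hsol⟩ := stmt19_general (convex_Icc a b)
    ⟨a, Set.left_mem_Icc.2 hab.le, b, Set.right_mem_Icc.2 hab.le, hab.ne⟩ hR hS hu hg hNu hNg
  set N := (anorm (Set.Icc a b) R u).toReal
  have hN : 0 ≤ N := ENNReal.toReal_nonneg
  have hRS : 4 * R + S ≤ 4 * (2 * max R (2 * S)) := by
    linarith [le_max_left R (2 * S), le_max_right R (2 * S)]
  have hNRS : N * (4 * R + S) ≤ 4 * N * (2 * max R (2 * S)) :=
    (mul_le_mul_of_nonneg_left hRS hN).trans_eq (by ring)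
  have hNR : 0 ≤ N * R := by positivity
  have hNRS0 : 0 ≤ N * (4 * R + S) := by positivity
  simp only [← Real.norm_eq_abs, ← Complex.norm_real]
  refine ⟨fun t ht z hz x hx hxt ↦ ?_, fun t ht z hz ↦ ?_, fun t ht z hz x hx hxt ↦ ?_⟩
  · have hz' := mul_lt_one_of_lt_one_div (norm_nonneg _) hNRS hz
    exact (hsum t ht z hz' x hx hxt).tsum_eq
  · exact hsol t ht z (mul_lt_one_of_lt_one_div (norm_nonneg _) (by linarith) hz)
  · have hz' := mul_lt_one_of_lt_one_div (norm_nonneg _) (c := N * (4 * R + S)) (by linarith) hz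
    have h := hsum t ht z hz' x hx hxt
    rw [← h.tsum_eq, h.summable.tsum_eq_zero_add]
    simp [lag]
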